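/- Let λ be an n-partition and let τ_0 = (n, n−1, …, 2, 1) be the longest n-permutation. For any reduced word s_{i_t}⋯s_{i_1} for τ_0, the Demazure polynomial d_λ(τ_0;x) = ρ_{i_t}⋯ρ_{i_1}·(x_1^{λ_1}⋯x_n^{λ_n}) equals the Schur polynomial s_λ(x) = Σ_{T ∈ T_λ} x^T, the sum of the weight monomials over all semistandard tableaux of shape λ with entries in [n]. -/

import Mathlib

/-
Common combinatorial set-up for "Tableaux for Key Polynomials, Demazure
Characters, and Atoms" (Proctor–Willis).

Conventions: a box `(j, i)` means column `j`, row `i`, both 1-indexed.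
Partial (remnant) tableaux are encoded by their column-length functions
`c : ℕ → ℕ` (each column of a remnant is a top segment of the original
column), together with the ambient value function `T : ℕ → ℕ → ℕ`.
-/

open scoped BigOperators Classical

noncomputable section

namespace KeyPoly

open MvPolynomial

/-- An `n`-partition `λ = (λ_1, …, λ_n)` with `λ_1 ≥ … ≥ λ_n ≥ 0`,
recorded as a function on `1, …, n`, vanishing beyond `n`. -/
structure NPartition (n : ℕ) where
  part : ℕ → ℕ
  antitone : ∀ ⦃i j : ℕ⦄, 1 ≤ i → i ≤ j → part j ≤ part i
  outside : ∀ i : ℕ, n < i → part i = 0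

variable {n : ℕ}

/-- The column length `ζ_j` of the Young diagram of `λ`. -/
def zeta (lam : NPartition n) (j : ℕ) : ℕ :=
  ((Finset.Icc 1 n).filter fun i => j ≤ lam.part i).card

/-- The box `(j,i)` (column `j`, row `i`) belongs to the diagram of `λ`. -/
def InShape (lam : NPartition n) (j i : ℕ) : Prop :=
  1 ≤ j ∧ 1 ≤ i ∧ i ≤ n ∧ j ≤ lam.part i

/-- The boxes of the diagram of `λ`, as a finite set of pairs (column, row). -/
def boxes (lam : NPartition n) : Finset (ℕ × ℕ) :=
  (Finset.Icc 1 (lam.part 1) ×ˢ Finset.Icc 1 n).filter fun b => b.1 ≤ lam.part b.2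

/-- `T` is a semistandard tableau of shape `λ` with values in `[1,n]`:
rows weakly increase eastward, columns strictly increase southward. -/
def IsSSYT (lam : NPartition n) (T : ℕ → ℕ → ℕ) : Prop :=
  (∀ j i, InShape lam j i → 1 ≤ T j i ∧ T j i ≤ n) ∧
  (∀ j i, InShape lam (j + 1) i → T j i ≤ T (j + 1) i) ∧
  (∀ j i, InShape lam j (i + 1) → T j i < T j (i + 1))

/-- Normalization: the filling vanishes outside the shape. -/
def ZeroOutside (lam : NPartition n) (T : ℕ → ℕ → ℕ) : Prop :=
  ∀ j i, ¬ InShape lam j i → T j i = 0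

/-- `T(l, k+1)`, with the boundary convention `n+1` when `k = ζ_l`. -/
def south (lam : NPartition n) (T : ℕ → ℕ → ℕ) (l k : ℕ) : ℕ :=
  if InShape lam l (k + 1) then T l (k + 1) else n + 1

/-- `T(l+1, k)`, with the boundary convention `n` when `l = λ_k`. -/
def east (lam : NPartition n) (T : ℕ → ℕ → ℕ) (l k : ℕ) : ℕ :=
  if InShape lam (l + 1) k then T (l + 1) k else n

/-- An `n`-permutation: a tuple `(p 1, …, p n)` of distinct entries from `[1,n]`. -/
def IsNPerm (n : ℕ) (p : ℕ → ℕ) : Prop :=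
  Set.BijOn p (Set.Icc 1 n) (Set.Icc 1 n)

/-- The `λ`-key `Y_λ(π)`: column `j` is `π_1, …, π_{ζ_j}` sorted increasingly
(from top to bottom); zero outside the shape. -/
def keyTab (lam : NPartition n) (p : ℕ → ℕ) (j i : ℕ) : ℕ :=
  if InShape lam j i then
    (((Finset.Icc 1 (zeta lam j)).image p).sort (· ≤ ·)).getD (i - 1) 0
  else 0

/-- A semistandard `T` is a key if the values of each column contain the
values of every column to its east. -/
def colSet (lam : NPartition n) (T : ℕ → ℕ → ℕ) (j : ℕ) : Finset ℕ :=
  (Finset.Icc 1 (zeta lam j)).image (T j)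

def IsKey (lam : NPartition n) (T : ℕ → ℕ → ℕ) : Prop :=
  ∀ j j' : ℕ, 1 ≤ j → j ≤ j' → j' ≤ lam.part 1 → colSet lam T j' ⊆ colSet lam T j

/-! ### The (right) scanning method -/

/-- The next column of the scanning path: the earliest column `h' > h`
(up to `maxCol`) whose column bottom in the remnant `c` is nonempty and has
value weakly larger than the bottom value of column `h`. -/
def nextCol (T : ℕ → ℕ → ℕ) (c : ℕ → ℕ) (maxCol h : ℕ) : Option ℕ :=
  (List.range' (h + 1) (maxCol - h)).find?
    (fun h' => decide (0 < c h' ∧ T h (c h) ≤ T h' (c h')))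

/-- Columns of the scanning path (EWIS of column bottoms) starting at column `h`,
with explicit fuel. -/
def pathColsAux (T : ℕ → ℕ → ℕ) (c : ℕ → ℕ) (maxCol : ℕ) : ℕ → ℕ → List ℕ
  | 0, h => [h]
  | fuel + 1, h =>
    match nextCol T c maxCol h with
    | none => [h]
    | some h' => h :: pathColsAux T c maxCol fuel h'

/-- Columns of the scanning path starting at the bottom of column `j` of the
remnant with column lengths `c`. -/
def pathCols (T : ℕ → ℕ → ℕ) (c : ℕ → ℕ) (maxCol j : ℕ) : List ℕ :=
  pathColsAux T c maxCol maxCol j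

/-- Remove the scanning path starting in column `j` from the remnant `c`. -/
def removePath (T : ℕ → ℕ → ℕ) (c : ℕ → ℕ) (maxCol j : ℕ) : ℕ → ℕ :=
  fun h => if h ∈ pathCols T c maxCol j then c h - 1 else c h

/-- Iterate path removal `r` times, always starting from column `j`. -/
def remnantIter (T : ℕ → ℕ → ℕ) (c0 : ℕ → ℕ) (maxCol j : ℕ) : ℕ → ℕ → ℕ
  | 0 => c0
  | r + 1 => removePath T (remnantIter T c0 maxCol j r) maxCol j

/-- Column lengths of the remnant tableau `T^{(j;i)}`. -/
def remnant (lam : NPartition n) (T : ℕ → ℕ → ℕ) (j i : ℕ) : ℕ → ℕ :=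
  remnantIter T (zeta lam) (lam.part 1) j (zeta lam j - i)

/-- The scanning path `P(T; j, i)`, recorded by its list of columns. -/
def scanPath (lam : NPartition n) (T : ℕ → ℕ → ℕ) (j i : ℕ) : List ℕ :=
  pathCols T (remnant lam T j i) (lam.part 1) j

/-- The scanning value `S(T; j, i)`: the last value of the EWIS from `(j,i)`. -/
def scanValue (lam : NPartition n) (T : ℕ → ℕ → ℕ) (j i : ℕ) : ℕ :=
  T ((scanPath lam T j i).getLastD j)
    (remnant lam T j i ((scanPath lam T j i).getLastD j))

/-- The box `(l,k)` lies on the scanning path `P(T; j, i)`. -/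
def InScanPath (lam : NPartition n) (T : ℕ → ℕ → ℕ) (j i l k : ℕ) : Prop :=
  l ∈ scanPath lam T j i ∧ k = remnant lam T j i l

/-- `m(U)` where `U` is the remnant with column lengths `c` restricted to the
columns `l+1, …, maxCol`:  the maximum of the column-bottom values, with the
convention `m((())) = 1` for the empty tableau. -/
def mEast (T : ℕ → ℕ → ℕ) (c : ℕ → ℕ) (maxCol l : ℕ) : ℕ :=
  max 1 (((Finset.Icc (l + 1) maxCol).filter fun h => 0 < c h).sup fun h => T h (c h))

/-! ### The condition sets A, C, and B -/

/-- The set `A_λ(T, π; l, k)`. -/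
def Aset (lam : NPartition n) (T : ℕ → ℕ → ℕ) (p : ℕ → ℕ) (l k : ℕ) : Set ℕ :=
  if keyTab lam p l k < mEast T (remnant lam T l k) (lam.part 1) l then (∅ : Set ℕ)
  else Set.Icc k (min (keyTab lam p l k) (min (south lam T l k - 1) (east lam T l k)))

/-- The set `C_λ(T, π; l, k)`. -/
def Cset (lam : NPartition n) (T : ℕ → ℕ → ℕ) (p : ℕ → ℕ) (l k : ℕ) : Set ℕ :=
  if l = lam.part 1 then {keyTab lam p l k}
  else if keyTab lam p l k < mEast T (remnant lam T l k) (lam.part 1) l then (∅ : Set ℕ)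
  else if mEast T (remnant lam T l k) (lam.part 1) l = keyTab lam p l k then
    Set.Icc k (min (keyTab lam p l k) (min (south lam T l k - 1) (east lam T l k)))
  else {keyTab lam p l k} ∩ Set.Icc k (min (south lam T l k - 1) (east lam T l k))

/-- The row index `a(l,k;j)`:  the `i` with `(l-1,k) ∈ P(T;j,i)`
(convention `a(l,k;l) = k`). -/
def aIdx (lam : NPartition n) (T : ℕ → ℕ → ℕ) (l k j : ℕ) : ℕ :=
  if j = l then k
  else ((Finset.Icc 1 (zeta lam j)).filter fun i => InScanPath lam T j i (l - 1) k).sup id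

/-- The row index `b(l,k;j)`:  the `i` with `(l,k+1) ∈ P(T;j,i)` when `k < ζ_l`,
and `ζ_j + 1` when `k = ζ_l` (convention `b(l,k;l) = k+1`). -/
def bIdx (lam : NPartition n) (T : ℕ → ℕ → ℕ) (l k j : ℕ) : ℕ :=
  if j = l then k + 1
  else if k = zeta lam l then zeta lam j + 1
  else ((Finset.Icc 1 (zeta lam j)).filter fun i => InScanPath lam T j i l (k + 1)).sup id

/-- `E(l,k;j,i)`:  the value of `T` at the box `(h,m)` of `P(T;j,i)` with `h < l`
maximal (convention `E(l,k;l,k) = k`). -/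
def Epath (lam : NPartition n) (T : ℕ → ℕ → ℕ) (l k j i : ℕ) : ℕ :=
  if j = l then k
  else
    T (((scanPath lam T j i).filter fun h => decide (h < l)).foldr max 0)
      (remnant lam T j i (((scanPath lam T j i).filter fun h => decide (h < l)).foldr max 0))

/-- The set `B_λ(T, π; l, k) = ⋂_{j=1}^{l} ⋃_{i=a(j)}^{b(j)-1} [E(l,k;j,i), Y_λ(π)(j,i)]`. -/
def Bset (lam : NPartition n) (T : ℕ → ℕ → ℕ) (p : ℕ → ℕ) (l k : ℕ) : Set ℕ :=
  {v | ∀ j, 1 ≤ j → j ≤ l →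
    ∃ i, aIdx lam T l k j ≤ i ∧ i + 1 ≤ bIdx lam T l k j ∧
      Epath lam T l k j i ≤ v ∧ v ≤ keyTab lam p j i}

/-! ### The left scanning method -/

/-- The largest row `r ≤ c j` of column `j` whose value is at most `x`. -/
def maxRow (T : ℕ → ℕ → ℕ) (c : ℕ → ℕ) (j x : ℕ) : ℕ :=
  ((Finset.Icc 1 (c j)).filter fun r => T j r ≤ x).sup id

/-- The rows of the maximizing weakly decreasing sequence through columns
`j, j-1, …, 1` with initial bound `x`, in a remnant with column lengths `c`. -/
def leftRows (T : ℕ → ℕ → ℕ) (c : ℕ → ℕ) : ℕ → ℕ → List ℕ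
  | 0, _ => []
  | j + 1, x => maxRow T c (j + 1) x :: leftRows T c j (T (j + 1) (maxRow T c (j + 1) x))

/-- The column-1 value at the end of the left scanning path originating at `(j, r)`. -/
def leftEndVal (T : ℕ → ℕ → ℕ) (c : ℕ → ℕ) (j r : ℕ) : ℕ :=
  T 1 ((leftRows T c j (T j r)).getLastD 0)

/-- Remove the left scanning path originating at `(l, c l)`, together with
all values beneath it, from the remnant `c`. -/
def leftRemovePath (T : ℕ → ℕ → ℕ) (c : ℕ → ℕ) (l : ℕ) : ℕ → ℕ :=
  fun j =>
    if 1 ≤ j ∧ j ≤ l then (leftRows T c l (T l (c l))).getD (l - j) 0 - 1 else c j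

/-- Iterate left-path removal `r` times (always for column `l`). -/
def leftRemnantIter (T : ℕ → ℕ → ℕ) (c0 : ℕ → ℕ) (l : ℕ) : ℕ → ℕ → ℕ
  | 0 => c0
  | r + 1 => leftRemovePath T (leftRemnantIter T c0 l r) l

/-- Column lengths of the left remnant used to compute `M(T; l, i)`:
`T` restricted to its first `l` columns with the left scanning paths
originating at `(l, ζ_l), …, (l, i+1)` (and everything beneath them) removed. -/
def leftRemnant (lam : NPartition n) (T : ℕ → ℕ → ℕ) (l i : ℕ) : ℕ → ℕ :=
  leftRemnantIter T (zeta lam) l (zeta lam l - i)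

/-- The left scanning value `M(T; l, i)`. -/
def leftScanValue (lam : NPartition n) (T : ℕ → ℕ → ℕ) (l i : ℕ) : ℕ :=
  leftEndVal T (leftRemnant lam T l i) l i

/-! ### The condition sets F and G -/

/-- The set `F_λ(T, σ; l, k)`. -/
def Fset (lam : NPartition n) (T : ℕ → ℕ → ℕ) (sg : ℕ → ℕ) (l k : ℕ) : Set ℕ :=
  if l = 1 then Set.Icc (keyTab lam sg 1 k) (south lam T 1 k - 1)
  else
    let U := leftRemnant lam T l k
    let q := maxRow T U (l - 1) (south lam T l k - 1)
    let P := (Finset.Icc 1 q).filter fun h => keyTab lam sg l k ≤ leftEndVal T U (l - 1) h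
    if hP : P.Nonempty then Set.Icc (T (l - 1) (P.min' hP)) (south lam T l k - 1)
    else (∅ : Set ℕ)

/-- The set `G_λ(T, σ; l, k)`. -/
def Gset (lam : NPartition n) (T : ℕ → ℕ → ℕ) (sg : ℕ → ℕ) (l k : ℕ) : Set ℕ :=
  if l = 1 then {keyTab lam sg 1 k}
  else
    let U := leftRemnant lam T l k
    let q := maxRow T U (l - 1) (south lam T l k - 1)
    let P := (Finset.Icc 1 q).filter fun h => leftEndVal T U (l - 1) h = keyTab lam sg l k
    if hP : P.Nonempty then
      Set.Icc (T (l - 1) (P.min' hP))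
        (min ((if P.max' hP + 1 ≤ U (l - 1) then T (l - 1) (P.max' hP + 1) else n + 1) - 1)
          (south lam T l k - 1))
    else (∅ : Set ℕ)

/-! ### Polynomials, divided differences, words -/

/-- Polynomials in the variables `X 1, …, X n` (indexed by `ℕ`) over `ℚ`. -/
abbrev Poly : Type := MvPolynomial ℕ ℚ

/-- The action of `s_i` on polynomials: interchange `x_i` and `x_{i+1}`. -/
def sOp (i : ℕ) (P : Poly) : Poly := rename (Equiv.swap i (i + 1)) P

/-- The divided difference operator
`ρ_i = (x_i - x_{i+1})⁻¹ ∘ (1 - s_i) ∘ x_i`, defined as the unique polynomial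
`Q` with `(x_i - x_{i+1}) Q = x_i P - s_i (x_i P)`. -/
def rhoOp (i : ℕ) (P : Poly) : Poly :=
  if h : ∃ Q : Poly, (X i - X (i + 1)) * Q = X i * P - sOp i (X i * P) then h.choose
  else 0

/-- The operator `ρ̄_i := ρ_i - 1`. -/
def rhoBarOp (i : ℕ) (P : Poly) : Poly := rhoOp i P - P

/-- Apply operators indexed by a word `[i_t, …, i_1]`, rightmost first:
`applyOps f [i_t, …, i_1] P = f i_t (⋯ (f i_1 P))`. -/
def applyOps (f : ℕ → Poly → Poly) : List ℕ → Poly → Poly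
  | [], P => P
  | i :: w, P => f i (applyOps f w P)

/-- The monomial `x_1^{λ_1} ⋯ x_n^{λ_n}`. -/
def lamMonomial (lam : NPartition n) : Poly :=
  ∏ i ∈ Finset.Icc 1 n, X i ^ lam.part i

/-- The weight monomial `x^T = ∏ x_i^{c_i}` of the filling `T`. -/
def weight (lam : NPartition n) (T : ℕ → ℕ → ℕ) : Poly :=
  ∏ b ∈ boxes lam, X (T b.1 b.2)

/-- The simple reflection `s_i` acting by value. -/
def swapVal (i v : ℕ) : ℕ := if v = i then i + 1 else if v = i + 1 then i else v

/-- The permutation `s_{i_t} ⋯ s_{i_1}.(1, 2, …, n)` obtained by applying the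
word `w = [i_t, …, i_1]` (rightmost letter first, each acting by value) to the
identity. -/
def permOfWord (w : List ℕ) : ℕ → ℕ := w.foldr (fun i f => swapVal i ∘ f) id

/-- `w` is a word in letters `s_1, …, s_{n-1}` producing `π` from `(1, …, n)`. -/
def WordFor (n : ℕ) (w : List ℕ) (p : ℕ → ℕ) : Prop :=
  (∀ i ∈ w, 1 ≤ i ∧ i + 1 ≤ n) ∧ ∀ t, 1 ≤ t → t ≤ n → permOfWord w t = p t

/-- `w` is a reduced word for `π`: it produces `π` with minimal length. -/
def IsReducedWord (n : ℕ) (w : List ℕ) (p : ℕ → ℕ) : Prop :=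
  WordFor n w p ∧ ∀ w' : List ℕ, WordFor n w' p → w.length ≤ w'.length

/-- The atom `c_λ(π;x) = ρ̄_{i_t} ⋯ ρ̄_{i_1} . x_1^{λ_1} ⋯ x_n^{λ_n}`, computed
from a choice of reduced word for `π` (it is independent of this choice). -/
def atomPoly (lam : NPartition n) (p : ℕ → ℕ) : Poly :=
  if h : ∃ w : List ℕ, IsReducedWord n w p then
    applyOps rhoBarOp h.choose (lamMonomial lam)
  else 0

/-! ### `S_n^λ` -/

/-- The set `Q_λ` of distinct column lengths of `λ`. -/
def Qset (lam : NPartition n) : Finset ℕ := (Finset.Icc 1 (lam.part 1)).image (zeta lam)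

/-- `π ∈ S_n^λ`: an `n`-permutation increasing on each block `[q_{r-1}+1, q_r]`
cut out by the column lengths of `λ` (equivalently, `π_i < π_j` whenever
`i < j` and no element of `Q_λ` lies in `[i, j)`). -/
def InSnLam (lam : NPartition n) (p : ℕ → ℕ) : Prop :=
  IsNPerm n p ∧ ∀ i j, 1 ≤ i → i < j → j ≤ n →
    (∀ q ∈ Qset lam, q < i ∨ j ≤ q) → p i < p j

end KeyPoly

namespace KeyPoly
open MvPolynomial

/-! ### Part A: the operators -/

lemma sOp_X_left (i : ℕ) : sOp i (X i) = X (i+1) := by simp [sOp]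
lemma sOp_X_right (i : ℕ) : sOp i (X (i+1)) = X i := by simp [sOp]
lemma sOp_X_other (i k : ℕ) (h : k ≠ i) (h' : k ≠ i + 1) : sOp i (X k) = X k := by
  simp [sOp, Equiv.swap_apply_of_ne_of_ne h h']
lemma sOp_mul (i : ℕ) (P Q : Poly) : sOp i (P * Q) = sOp i P * sOp i Q := by simp [sOp]
lemma sOp_sub (i : ℕ) (P Q : Poly) : sOp i (P - Q) = sOp i P - sOp i Q := by simp [sOp]
lemma sOp_add (i : ℕ) (P Q : Poly) : sOp i (P + Q) = sOp i P + sOp i Q := by simp [sOp]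
lemma sOp_sOp (i : ℕ) (P : Poly) : sOp i (sOp i P) = P := by
  simp only [sOp, rename_rename]
  convert rename_id_apply P
  ext k; simp

lemma sOp_comm (i j : ℕ) (h : i + 1 < j) (P : Poly) : sOp i (sOp j P) = sOp j (sOp i P) := by
  simp only [sOp, rename_rename]
  congr 2
  funext k
  simp only [Function.comp, Equiv.swap_apply_def]
  split_ifs <;> omega

lemma sOp_braid (i : ℕ) (P : Poly) :
    sOp i (sOp (i+1) (sOp i P)) = sOp (i+1) (sOp i (sOp (i+1) P)) := by
  simp only [sOp, rename_rename]
  congr 2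
  funext k
  simp only [Function.comp, Equiv.swap_apply_def]
  split_ifs <;> omega

lemma X_sub_ne (i j : ℕ) (h : i ≠ j) : (X i - X j : Poly) ≠ 0 := by
  intro h0
  exact h (X_injective (sub_eq_zero.mp h0))

lemma dvd_sub_sOp (i : ℕ) (P : Poly) : (X i - X (i+1) : Poly) ∣ P - sOp i P := by
  rw [← Ideal.mem_span_singleton, ← Ideal.Quotient.eq]
  have : (Ideal.Quotient.mkₐ ℚ (Ideal.span {(X i - X (i+1) : Poly)})) =
      (Ideal.Quotient.mkₐ ℚ (Ideal.span {(X i - X (i+1) : Poly)})).comp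
        (rename (Equiv.swap i (i+1))) := by
    apply MvPolynomial.algHom_ext
    intro k
    simp only [AlgHom.comp_apply, rename_X, Ideal.Quotient.mkₐ_eq_mk]
    rw [Ideal.Quotient.eq, Ideal.mem_span_singleton]
    by_cases h : k = i
    · subst h; simp
    by_cases h' : k = i + 1
    · subst h'; simp only [Equiv.swap_apply_right]
      exact (dvd_sub_comm).mp dvd_rfl
    · rw [Equiv.swap_apply_of_ne_of_ne h h']; simp
  exact DFunLike.congr_fun this P

lemma rhoOp_spec (i : ℕ) (P : Poly) :
    (X i - X (i+1)) * rhoOp i P = X i * P - X (i+1) * sOp i P := by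
  have h : ∃ Q : Poly, (X i - X (i + 1)) * Q = X i * P - sOp i (X i * P) := by
    obtain ⟨Q, hQ⟩ := dvd_sub_sOp i (X i * P)
    exact ⟨Q, hQ.symm⟩
  have := h.choose_spec
  rw [rhoOp, dif_pos h, this, sOp_mul, sOp_X_left]

lemma sOp_rhoOp (i : ℕ) (P : Poly) : sOp i (rhoOp i P) = rhoOp i P := by
  apply mul_left_cancel₀ (X_sub_ne i (i+1) (by omega))
  have h := rhoOp_spec i P
  have h2 := congrArg (sOp i) h
  simp only [sOp_mul, sOp_sub, sOp_X_left, sOp_X_right, sOp_sOp] at h2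
  linear_combination - h2 - h

/-- `ρ_i P = P + x_{i+1} ∂_i P`. -/
lemma rhoOp_eq (i : ℕ) (P : Poly) :
    ∃ Q : Poly, sOp i Q = Q ∧ rhoOp i P = P + X (i+1) * Q := by
  obtain ⟨Q, hQ⟩ := dvd_sub_sOp i P
  have hne := X_sub_ne i (i+1) (by omega)
  refine ⟨Q, ?_, ?_⟩
  · apply mul_left_cancel₀ hne
    have h2 := congrArg (sOp i) hQ
    simp only [sOp_mul, sOp_sub, sOp_X_left, sOp_X_right, sOp_sOp] at h2
    linear_combination h2 + hQ
  · apply mul_left_cancel₀ hne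
    rw [rhoOp_spec]
    linear_combination X (i+1) * hQ

lemma rhoOp_comm (i j : ℕ) (h : i + 1 < j) (P : Poly) :
    rhoOp i (rhoOp j P) = rhoOp j (rhoOp i P) := by
  apply mul_left_cancel₀ (X_sub_ne i (i+1) (by omega))
  apply mul_left_cancel₀ (X_sub_ne j (j+1) (by omega))
  have e1 := rhoOp_spec i P
  have e2 := rhoOp_spec j P
  have e3 := rhoOp_spec i (rhoOp j P)
  have e4 := rhoOp_spec j (rhoOp i P)
  have e1' := congrArg (sOp j) e1
  have e2' := congrArg (sOp i) e2
  simp only [sOp_mul, sOp_sub] at e1' e2'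
  rw [sOp_X_other j i (by omega) (by omega), sOp_X_other j (i+1) (by omega) (by omega)] at e1'
  rw [sOp_X_other i j (by omega) (by omega), sOp_X_other i (j+1) (by omega) (by omega)] at e2'
  rw [sOp_comm i j h] at e2'
  linear_combination (X j - X (j+1)) * e3 + X i * e2 - X (i+1) * e2'
    - ((X i - X (i+1)) * e4 + X j * e1 - X (j+1) * e1')

lemma rhoOp_braid (i : ℕ) (P : Poly) :
    rhoOp i (rhoOp (i+1) (rhoOp i P)) = rhoOp (i+1) (rhoOp i (rhoOp (i+1) P)) := by
  have l : ∀ Q : Poly, sOp i (X i * Q) = X (i+1) * sOp i Q := fun Q => by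
    rw [sOp_mul, sOp_X_left]
  apply mul_left_cancel₀ (X_sub_ne i (i+1) (by omega))
  apply mul_left_cancel₀ (X_sub_ne (i+1) (i+2) (by omega))
  apply mul_left_cancel₀ (X_sub_ne i (i+2) (by omega))
  have a1 : sOp i (X i) = X (i+1) := sOp_X_left i
  have a2 : sOp i (X (i+1)) = X i := sOp_X_right i
  have a3 : sOp i (X (i+2)) = X (i+2) := sOp_X_other _ _ (by omega) (by omega)
  have b1 : sOp (i+1) (X i) = X i := sOp_X_other _ _ (by omega) (by omega)
  have b2 : sOp (i+1) (X (i+1)) = X (i+2) := sOp_X_left (i+1)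
  have b3 : sOp (i+1) (X (i+2)) = X (i+1) := sOp_X_right (i+1)
  -- left hand side
  have hL : (X i - X (i+2)) * ((X (i+1) - X (i+2)) * ((X i - X (i+1)) *
      rhoOp i (rhoOp (i+1) (rhoOp i P)))) =
      X i ^ 2 * X (i+1) * P - X i * X (i+1)^2 * sOp i P - X i^2 * X (i+2) * sOp (i+1) P
      + X i * X (i+2)^2 * sOp (i+1) (sOp i P) + X (i+1)^2 * X (i+2) * sOp i (sOp (i+1) P)
      - X (i+1) * X (i+2)^2 * sOp i (sOp (i+1) (sOp i P)) := by
    set P1 := rhoOp i P with hP1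
    have e1 : _ = _ := rhoOp_spec i P
    rw [← hP1] at e1
    have s1 : sOp i P1 = P1 := sOp_rhoOp i P
    set P2 := rhoOp (i+1) P1 with hP2
    have e2 : (X (i+1) - X (i+2)) * P2 = X (i+1) * P1 - X (i+2) * sOp (i+1) P1 :=
      rhoOp_spec (i+1) P1
    have e3 := rhoOp_spec i P2
    have e1t := congrArg (sOp (i+1)) e1
    have e2s := congrArg (sOp i) e2
    have e1ts := congrArg (sOp i) e1t
    simp only [sOp_mul, sOp_sub, a1, a2, a3, b1, b2, b3, s1] at e1t e2s e1ts
    apply mul_left_cancel₀ (X_sub_ne i (i+1) (by omega))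
    linear_combination (X i - X (i+1)) * ((X i - X (i+2)) * (X (i+1) - X (i+2)) * e3
      + X i * ((X i - X (i+2)) * e2 + 0) - X (i+1) * ((X (i+1) - X (i+2)) * e2s) )
      + (X i - X (i+1)) * (- X i * X (i+2) * e1t + X (i+1) * X (i+2) * e1ts) + 
      (X i * (X i - X (i+2)) * X (i+1) - X (i+1) * (X (i+1) - X (i+2)) * X i) * e1
  have hR : (X i - X (i+2)) * ((X (i+1) - X (i+2)) * ((X i - X (i+1)) *
      rhoOp (i+1) (rhoOp i (rhoOp (i+1) P)))) =
      X i ^ 2 * X (i+1) * P - X i * X (i+1)^2 * sOp i P - X i^2 * X (i+2) * sOp (i+1) P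
      + X i * X (i+2)^2 * sOp (i+1) (sOp i P) + X (i+1)^2 * X (i+2) * sOp i (sOp (i+1) P)
      - X (i+1) * X (i+2)^2 * sOp i (sOp (i+1) (sOp i P)) := by
    rw [sOp_braid]
    set P1 := rhoOp (i+1) P with hP1
    have e1 : (X (i+1) - X (i+2)) * P1 = X (i+1) * P - X (i+2) * sOp (i+1) P :=
      rhoOp_spec (i+1) P
    have s1 : sOp (i+1) P1 = P1 := sOp_rhoOp (i+1) P
    set P2 := rhoOp i P1 with hP2
    have e2 : _ = _ := rhoOp_spec i P1
    rw [← hP2] at e2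
    have e3 : (X (i+1) - X (i+2)) * rhoOp (i+1) P2 = X (i+1) * P2 - X (i+2) * sOp (i+1) P2 :=
      rhoOp_spec (i+1) P2
    have e1t := congrArg (sOp i) e1
    have e2s := congrArg (sOp (i+1)) e2
    have e1ts := congrArg (sOp (i+1)) e1t
    simp only [sOp_mul, sOp_sub, a1, a2, a3, b1, b2, b3, s1] at e1t e2s e1ts
    apply mul_left_cancel₀ (X_sub_ne (i+1) (i+2) (by omega))
    linear_combination (X (i+1) - X (i+2)) * ((X i - X (i+2)) * (X i - X (i+1)) * e3
      + X (i+1) * ((X i - X (i+2)) * e2 + 0) - X (i+2) * ((X i - X (i+1)) * e2s) )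
      + (X (i+1) - X (i+2)) * (- X (i+1) * X (i+1) * e1t + X (i+2) * X (i+2) * e1ts) + 
      (X (i+1) * (X i - X (i+2)) * X i - X (i+2) * (X i - X (i+1)) * X i) * e1
  rw [hL, hR]

end KeyPoly

namespace KeyPoly
open MvPolynomial

/-! ### Part B: reduced words -/

/-- adjacent transposition -/
abbrev tr (i : ℕ) : Equiv.Perm ℕ := Equiv.swap i (i+1)

/-- inversions of `τ` in positions `1..n`. -/
def invs (n : ℕ) (τ : Equiv.Perm ℕ) : Finset (ℕ × ℕ) :=
  (Finset.Icc 1 n ×ˢ Finset.Icc 1 n).filter fun p => p.1 < p.2 ∧ τ p.2 < τ p.1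

lemma mem_invs {n : ℕ} {τ : Equiv.Perm ℕ} {a b : ℕ} :
    (a, b) ∈ invs n τ ↔ 1 ≤ a ∧ b ≤ n ∧ a < b ∧ τ b < τ a := by
  simp only [invs, Finset.mem_filter, Finset.mem_product, Finset.mem_Icc]
  constructor
  · rintro ⟨⟨⟨h1, h2⟩, h3, h4⟩, h5, h6⟩; exact ⟨h1, h4, h5, h6⟩
  · rintro ⟨h1, h4, h5, h6⟩; exact ⟨⟨⟨h1, by omega⟩, by omega, h4⟩, h5, h6⟩

lemma tr_left (i : ℕ) : tr i i = i + 1 := Equiv.swap_apply_left _ _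
lemma tr_right (i : ℕ) : tr i (i + 1) = i := Equiv.swap_apply_right _ _
lemma tr_other {i k : ℕ} (h : k ≠ i) (h' : k ≠ i + 1) : tr i k = k :=
  Equiv.swap_apply_of_ne_of_ne h h'
lemma tr_tr (i k : ℕ) : tr i (tr i k) = k := Equiv.swap_apply_self _ _ _
lemma mul_tr_tr (i : ℕ) (τ : Equiv.Perm ℕ) : τ * tr i * tr i = τ := by
  ext k; simp [Equiv.Perm.mul_apply]

lemma tr_cases (i k : ℕ) : (k = i ∧ tr i k = i + 1) ∨ (k = i + 1 ∧ tr i k = i) ∨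
    (k ≠ i ∧ k ≠ i + 1 ∧ tr i k = k) := by
  by_cases h : k = i
  · left; subst h; exact ⟨rfl, tr_left k⟩
  by_cases h' : k = i + 1
  · right; left; subst h'; exact ⟨rfl, tr_right i⟩
  · right; right; exact ⟨h, h', tr_other h h'⟩

lemma invs_mul_tr {n i : ℕ} {τ : Equiv.Perm ℕ} (h1 : 1 ≤ i) (h2 : i + 1 ≤ n)
    (h : τ i < τ (i+1)) :
    (invs n (τ * tr i)).card = (invs n τ).card + 1 := by
  have key : invs n (τ * tr i) = insert (i, i+1)
      ((invs n τ).image fun p => (tr i p.1, tr i p.2)) := by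
    ext ⟨a, b⟩
    simp only [Finset.mem_insert, Finset.mem_image, Prod.exists, Prod.mk.injEq, mem_invs,
      Equiv.Perm.mul_apply]
    constructor
    · rintro ⟨ha, hb, hab, hlt⟩
      by_cases hc : a = i ∧ b = i + 1
      · left; exact hc
      · right
        refine ⟨tr i a, tr i b, ⟨?_, ?_, ?_, ?_⟩, tr_tr _ _, tr_tr _ _⟩
        · rcases tr_cases i a with h | h | h <;> omega
        · rcases tr_cases i b with h | h | h <;> omega
        · rcases tr_cases i b with h | h | h <;> rcases tr_cases i a with h' | h' | h' <;> omega
        · exact hlt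
    · rintro (⟨rfl, rfl⟩ | ⟨c, d, ⟨hc, hd, hcd, hlt⟩, rfl, rfl⟩)
      · rw [tr_left, tr_right]; exact ⟨h1, h2, by omega, h⟩
      · rw [tr_tr, tr_tr]
        have : ¬ (c = i ∧ d = i + 1) := by rintro ⟨rfl, rfl⟩; omega
        refine ⟨?_, ?_, ?_, hlt⟩
        · rcases tr_cases i c with h | h | h <;> omega
        · rcases tr_cases i d with h | h | h <;> omega
        · rcases tr_cases i d with h | h | h <;> rcases tr_cases i c with h' | h' | h' <;> omega
  rw [key, Finset.card_insert_of_notMem, Finset.card_image_of_injective]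
  · rintro ⟨a, b⟩ ⟨c, d⟩ hh
    simp only [Prod.mk.injEq, EmbeddingLike.apply_eq_iff_eq] at hh
    ext <;> simp [hh.1, hh.2]
  · simp only [Finset.mem_image, Prod.exists, Prod.mk.injEq, mem_invs, not_exists, not_and]
    rintro c d ⟨hc, hd, hcd, hlt⟩ e1 e2
    rcases tr_cases i c with h | h | h <;> rcases tr_cases i d with h' | h' | h' <;> omega

lemma invs_desc {n i : ℕ} {τ : Equiv.Perm ℕ} (h1 : 1 ≤ i) (h2 : i + 1 ≤ n)
    (h : τ (i+1) < τ i) :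
    (invs n τ).card = (invs n (τ * tr i)).card + 1 := by
  have := invs_mul_tr (τ := τ * tr i) h1 h2
    (by simp only [Equiv.Perm.mul_apply, tr_left, tr_right]; exact h)
  rwa [mul_tr_tr] at this

lemma mono_of_noDesc {n : ℕ} {τ : Equiv.Perm ℕ}
    (h : ∀ i, 1 ≤ i → i + 1 ≤ n → τ i < τ (i+1)) (a b : ℕ) (ha : 1 ≤ a) (hab : a < b)
    (hb : b ≤ n) : τ a < τ b := by
  induction b with
  | zero => omega
  | succ b ih =>
    have := h b (by omega) hb
    rcases Nat.lt_or_ge a b with h' | h'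
    · exact (ih h' (by omega)).trans this
    · have : a = b := by omega
      subst this; assumption

/-- Reduced words for `τ⁻¹`, built along descents of `τ`. -/
inductive RW (n : ℕ) : Equiv.Perm ℕ → List ℕ → Prop
  | nil (τ : Equiv.Perm ℕ) (h : ∀ i, 1 ≤ i → i + 1 ≤ n → τ i < τ (i+1)) : RW n τ []
  | cons (τ : Equiv.Perm ℕ) (i : ℕ) (w : List ℕ) (h1 : 1 ≤ i) (h2 : i + 1 ≤ n)
      (h : τ (i+1) < τ i) (hw : RW n (τ * tr i) w) : RW n τ (i :: w)

lemma RW.ex (n : ℕ) (k : ℕ) : ∀ τ : Equiv.Perm ℕ, (invs n τ).card = k → ∃ w, RW n τ w := by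
  induction k using Nat.strong_induction_on with
  | _ k ih =>
    intro τ hk
    by_cases hd : ∃ i, 1 ≤ i ∧ i + 1 ≤ n ∧ τ (i+1) < τ i
    · obtain ⟨i, h1, h2, h⟩ := hd
      have := invs_desc h1 h2 h
      obtain ⟨w, hw⟩ := ih _ (by omega) (τ * tr i) rfl
      exact ⟨_, RW.cons τ i w h1 h2 h hw⟩
    · push Not at hd
      refine ⟨[], RW.nil τ fun i h1 h2 => lt_of_le_of_ne (hd i h1 h2) fun h => ?_⟩
      have := τ.injective h
      omega

lemma RW.length {n : ℕ} {τ : Equiv.Perm ℕ} {w : List ℕ} (h : RW n τ w) :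
    w.length = (invs n τ).card := by
  induction h with
  | nil τ h =>
    symm
    rw [List.length_nil, Finset.card_eq_zero, Finset.eq_empty_iff_forall_notMem]
    rintro ⟨a, b⟩ hab
    rw [mem_invs] at hab
    have := mono_of_noDesc h a b hab.1 hab.2.2.1 hab.2.1
    omega
  | cons τ i w h1 h2 h hw ih =>
    rw [invs_desc h1 h2 h, List.length_cons, ih]

lemma RW.valid {n : ℕ} {τ : Equiv.Perm ℕ} {w : List ℕ} (h : RW n τ w) :
    ∀ i ∈ w, 1 ≤ i ∧ i + 1 ≤ n := by
  induction h with
  | nil τ h => simp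
  | cons τ i w h1 h2 h hw ih =>
    intro j hj
    rcases List.mem_cons.mp hj with rfl | hj
    · exact ⟨h1, h2⟩
    · exact ih j hj

lemma tr_comm {i j : ℕ} (h : i + 1 < j) (τ : Equiv.Perm ℕ) :
    τ * tr j * tr i = τ * tr i * tr j := by
  ext k
  simp only [Equiv.Perm.mul_apply]
  congr 1
  rcases tr_cases i k with h | h | h <;> rcases tr_cases j k with h' | h' | h' <;>
    rcases tr_cases i (tr j k) with h2 | h2 | h2 <;>
    rcases tr_cases j (tr i k) with h3 | h3 | h3 <;> omega

lemma tr_braid (i : ℕ) (τ : Equiv.Perm ℕ) :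
    τ * tr (i+1) * tr i * tr (i+1) = τ * tr i * tr (i+1) * tr i := by
  ext k
  simp only [Equiv.Perm.mul_apply]
  congr 1
  simp only [tr, Equiv.swap_apply_def]
  split_ifs <;> omega

/-- Independence of the operator of the reduced word. -/
lemma RW.ops_aux {n : ℕ} (k : ℕ)
    (ih : ∀ m < k, ∀ τ : Equiv.Perm ℕ, (invs n τ).card = m → ∀ w w', RW n τ w → RW n τ w' →
      ∀ P, applyOps rhoOp w P = applyOps rhoOp w' P)
    (τ : Equiv.Perm ℕ) (hk : (invs n τ).card = k) (i j : ℕ) (hij : i < j) (u v : List ℕ)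
    (hi1 : 1 ≤ i) (hi : τ (i+1) < τ i) (hu : RW n (τ * tr i) u)
    (hj2 : j + 1 ≤ n) (hj : τ (j+1) < τ j) (hv : RW n (τ * tr j) v) (P : Poly) :
    applyOps rhoOp (i :: u) P = applyOps rhoOp (j :: v) P := by
  have ci := invs_desc (n := n) hi1 (by omega) hi
  have cj := invs_desc (show 1 ≤ j by omega) hj2 hj
  rcases Nat.lt_or_ge (i+1) j with h | h
  · obtain ⟨x, hx⟩ := RW.ex n _ (τ * tr i * tr j) rfl
    have r1 : RW n (τ * tr i) (j :: x) := by
      refine RW.cons _ _ _ (by omega) hj2 ?_ hx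
      simp only [Equiv.Perm.mul_apply]
      rwa [tr_other (by omega) (by omega), tr_other (by omega) (by omega)]
    have r2 : RW n (τ * tr j) (i :: x) := by
      refine RW.cons _ _ _ (by omega) (by omega) ?_ ?_
      · simp only [Equiv.Perm.mul_apply]
        rwa [tr_other (by omega) (by omega), tr_other (by omega) (by omega)]
      · rwa [tr_comm h]
    have e1 := ih _ (by omega) _ rfl _ _ hu r1 P
    have e2 := ih _ (by omega) _ rfl _ _ hv r2 P
    simp only [applyOps] at e1 e2 ⊢
    rw [e1, e2, rhoOp_comm i j h]
  · obtain rfl : j = i + 1 := by omega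
    obtain ⟨x, hx⟩ := RW.ex n _ (τ * tr i * tr (i+1) * tr i) rfl
    have t1 : tr i (i+2) = i+2 := tr_other (by omega) (by omega)
    have t2 : tr (i+1) i = i := tr_other (by omega) (by omega)
    have t3 : tr (i+1) (i+2) = i+1 := tr_right (i+1)
    have t4 : tr (i+1) (i+1) = i+2 := tr_left (i+1)
    have hj' : τ (i+2) < τ (i+1) := hj
    have r1 : RW n (τ * tr i) ((i+1) :: i :: x) := by
      refine RW.cons _ _ _ (by omega) hj2 ?_ (RW.cons _ _ _ hi1 (by omega) ?_ hx)
      · show (τ * tr i) (i+2) < _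
        simp only [Equiv.Perm.mul_apply, t1, tr_right]
        omega
      · simp only [Equiv.Perm.mul_apply, t1, t2, t4, tr_left]
        omega
    have r2 : RW n (τ * tr (i+1)) (i :: (i+1) :: x) := by
      refine RW.cons _ _ _ (by omega) (by omega) ?_ (RW.cons _ _ _ (by omega) hj2 ?_ ?_)
      · simp only [Equiv.Perm.mul_apply, t2, t4]
        omega
      · show (τ * tr (i+1) * tr i) (i+2) < _
        simp only [Equiv.Perm.mul_apply, t1, t2, t3, tr_right]
        omega
      · rwa [tr_braid]
    have e1 := ih _ (by omega) _ rfl _ _ hu r1 P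
    have e2 := ih _ (by omega) _ rfl _ _ hv r2 P
    simp only [applyOps] at e1 e2 ⊢
    rw [e1, e2, rhoOp_braid]

lemma RW.ops {n : ℕ} (k : ℕ) : ∀ τ : Equiv.Perm ℕ, (invs n τ).card = k → ∀ w w',
    RW n τ w → RW n τ w' → ∀ P, applyOps rhoOp w P = applyOps rhoOp w' P := by
  induction k using Nat.strong_induction_on with
  | _ k ih =>
    intro τ hk w w' hw hw' P
    have hl := hw.length
    have hl' := hw'.length
    cases hw with
    | nil _ h =>
      have : w' = [] := List.length_eq_zero_iff.mp (by rw [hl', ← hl]; rfl)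
      rw [this]
    | cons _ i u hi1 hi2 hi hu =>
      cases hw' with
      | nil _ h => exact absurd (h i hi1 hi2) (by omega)
      | cons _ j v hj1 hj2 hj hv =>
        rcases lt_trichotomy i j with h | h | h
        · exact RW.ops_aux k ih τ hk i j h u v hi1 hi hu hj2 hj hv P
        · subst h
          have ci := invs_desc hi1 hi2 hi
          simp only [applyOps]
          rw [ih _ (by omega) _ rfl _ _ hu hv P]
        · exact (RW.ops_aux k ih τ hk j i h v u hj1 hj hv hi2 hi hu P).symm

/-- The permutation of a word. -/
def wperm (w : List ℕ) : Equiv.Perm ℕ := (w.map tr).prod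

lemma swapVal_eq (i v : ℕ) : swapVal i v = tr i v := by
  simp only [swapVal, tr, Equiv.swap_apply_def]

lemma permOfWord_eq (w : List ℕ) (t : ℕ) : permOfWord w t = wperm w t := by
  induction w with
  | nil => simp [permOfWord, wperm]
  | cons i w ih =>
    have : permOfWord (i :: w) t = swapVal i (permOfWord w t) := rfl
    rw [this, ih, swapVal_eq]
    simp [wperm, Equiv.Perm.mul_apply]

lemma wperm_inv_cons (i : ℕ) (w : List ℕ) : (wperm (i :: w))⁻¹ * tr i = (wperm w)⁻¹ := by
  simp [wperm, mul_inv_rev, mul_assoc]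

lemma wperm_fix {n : ℕ} {w : List ℕ} (h : ∀ i ∈ w, 1 ≤ i ∧ i + 1 ≤ n) (t : ℕ)
    (ht : t < 1 ∨ n < t) : wperm w t = t := by
  induction w with
  | nil => simp [wperm]
  | cons i w ih =>
    have hi := h i (by simp)
    have : wperm (i :: w) t = tr i (wperm w t) := by simp [wperm, Equiv.Perm.mul_apply]
    rw [this, ih fun j hj => h j (by simp [hj])]
    exact tr_other (by omega) (by omega)

lemma card_invs_le {n : ℕ} {w : List ℕ} (h : ∀ i ∈ w, 1 ≤ i ∧ i + 1 ≤ n) :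
    (invs n (wperm w)⁻¹).card ≤ w.length ∧
    ((invs n (wperm w)⁻¹).card = w.length → RW n (wperm w)⁻¹ w) := by
  induction w with
  | nil =>
    have : RW n (wperm [])⁻¹ [] := RW.nil _ (by simp [wperm])
    exact ⟨this.length.symm.le, fun _ => this⟩
  | cons i w ih =>
    obtain ⟨ih1, ih2⟩ := ih fun j hj => h j (by simp [hj])
    obtain ⟨h1, h2⟩ := h i (by simp)
    set τ := (wperm (i :: w))⁻¹ with hτ
    have e := wperm_inv_cons i w
    rw [← hτ] at e
    rw [← e] at ih1 ih2
    rw [List.length_cons]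
    rcases lt_trichotomy (τ (i+1)) (τ i) with hd | hd | hd
    · have := invs_desc h1 h2 hd
      exact ⟨by omega, fun hh => RW.cons _ _ _ h1 h2 hd (ih2 (by omega))⟩
    · have := τ.injective hd; omega
    · have := invs_mul_tr h1 h2 hd
      exact ⟨by omega, fun hh => by omega⟩

lemma RW.perm {n : ℕ} {τ : Equiv.Perm ℕ} {w : List ℕ} (h : RW n τ w)
    (hf : ∀ t, t < 1 ∨ n < t → τ t = t) : (wperm w)⁻¹ = τ := by
  induction h with
  | nil τ h =>
    have hs : StrictMono τ := by
      apply strictMono_nat_of_lt_succ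
      intro k
      have h0 : τ 0 = 0 := hf 0 (by omega)
      rcases Nat.eq_zero_or_pos k with rfl | hk
      · rw [h0]
        refine Nat.pos_of_ne_zero fun hh => ?_
        have := τ.injective (hh.trans h0.symm)
        omega
      · rcases Nat.lt_or_ge k n with hkn | hkn
        · exact h k hk hkn
        · rw [hf (k+1) (by omega)]
          by_contra hc
          have : τ (τ k) = τ k := hf _ (by omega)
          have := τ.injective this
          omega
    ext k
    have hs' : StrictMono (τ⁻¹ : Equiv.Perm ℕ) := by
      intro a b hab
      rw [← hs.lt_iff_lt]
      simpa using hab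
    have a1 := hs.le_apply (x := k)
    have a2 := hs'.le_apply (x := τ k)
    have a3 : (τ⁻¹ : Equiv.Perm ℕ) (τ k) = k := by simp
    rw [a3] at a2
    simp [wperm]; omega
  | cons τ i w h1 h2 h hw ih =>
    have e := wperm_inv_cons i w
    rw [ih, mul_right_cancel_iff] at e
    · exact e
    · intro t ht
      rw [Equiv.Perm.mul_apply, tr_other (by omega) (by omega), hf t ht]

lemma demazure_symm {n : ℕ} {w : List ℕ} (hw : IsReducedWord n w (fun t => n + 1 - t))
    (P : Poly) (i : ℕ) (h1 : 1 ≤ i) (h2 : i + 1 ≤ n) :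
    sOp i (applyOps rhoOp w P) = applyOps rhoOp w P := by
  obtain ⟨⟨hv, hp⟩, hmin⟩ := hw
  set τ := (wperm w)⁻¹ with hτ
  have hfix : ∀ t, t < 1 ∨ n < t → τ t = t := fun t ht => by
    rw [hτ, Equiv.Perm.inv_eq_iff_eq, wperm_fix hv t ht]
  obtain ⟨w', hw'⟩ := RW.ex n _ τ rfl
  have hp' := hw'.perm hfix
  have e : wperm w' = wperm w := by rw [← inv_inj, hp']
  have hle := hmin w' ⟨hw'.valid, fun t a b => by
    rw [permOfWord_eq, e, ← permOfWord_eq]; exact hp t a b⟩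
  have hl := hw'.length
  obtain ⟨c1, c2⟩ := card_invs_le hv
  rw [← hτ] at c1 c2
  have hR : RW n τ w := c2 (by omega)
  have hval : ∀ t, 1 ≤ t → t ≤ n → τ t = n + 1 - t := fun t a b => by
    rw [hτ, Equiv.Perm.inv_eq_iff_eq, ← permOfWord_eq, hp _ (by omega) (by omega)]
    show t = n + 1 - (n + 1 - t)
    omega
  obtain ⟨x, hx⟩ := RW.ex n _ (τ * tr i) rfl
  have hR' : RW n τ (i :: x) := RW.cons _ _ _ h1 h2
    (by rw [hval _ (by omega) h2, hval _ h1 (by omega)]; omega) hx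
  rw [RW.ops _ τ rfl _ _ hR hR' P]
  exact sOp_rhoOp _ _

end KeyPoly

namespace KeyPoly

/-! ### Part C: alternants and Gelfand–Tsetlin sums -/

section Alternant

variable {R : Type*} [CommRing R]

/-- The alternant `det (x_i ^ l_j)`. -/
def alt (x : ℕ → R) (n : ℕ) (l : Fin n → ℕ) : R :=
  Matrix.det (Matrix.of fun i j : Fin n => x i ^ l j)

/-- Sum over Gelfand–Tsetlin patterns with top row `lam`. -/
def gt (x : ℕ → R) : (n : ℕ) → (Fin n → ℕ) → R
  | 0, _ => 1
  | n + 1, lam => x n ^ lam (Fin.last n) *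
      ∑ μ ∈ Fintype.piFinset (fun j : Fin n => Finset.Icc (lam j.succ) (lam j.castSucc)),
        (∏ j, x n ^ (lam j.castSucc - μ j)) * gt x n μ

/-- The Vandermonde product. -/
def vdm (x : ℕ → R) (n : ℕ) : R := ∏ k ∈ Finset.range n, ∏ i : Fin k, (x i - x k)

lemma det_col {n : ℕ} (A B : Matrix (Fin (n+1)) (Fin (n+1)) R) (c : Fin n → R)
    (hl : ∀ i, A i (Fin.last n) = B i (Fin.last n))
    (h : ∀ i (j : Fin n), A i j.castSucc = B i j.castSucc + c j * A i j.succ) :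
    A.det = B.det := by
  rw [← Matrix.det_submatrix_equiv_self Fin.revPerm A,
    ← Matrix.det_submatrix_equiv_self Fin.revPerm B]
  apply Matrix.det_eq_of_forall_col_eq_smul_add_pred (fun j => c j.rev)
  · intro i; simp [hl]
  · intro i j
    simp [Fin.rev_succ, Fin.rev_castSucc, h]

lemma det_sums {n : ℕ} (x : ℕ → R) (y : R) (S : Fin n → Finset ℕ) (e : Fin n → ℕ → ℕ) :
    Matrix.det (Matrix.of fun i j : Fin n => ∑ m ∈ S j, x i ^ m * y ^ (e j m)) =
      ∑ m ∈ Fintype.piFinset S, (∏ j, y ^ (e j (m j))) * alt x n m := by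
  simp only [alt, Matrix.det_apply, Matrix.of_apply, Finset.prod_univ_sum, Finset.smul_sum,
    Finset.mul_sum]
  rw [Finset.sum_comm]
  refine Finset.sum_congr rfl fun m _ => Finset.sum_congr rfl fun σ _ => ?_
  rw [Finset.prod_mul_distrib, mul_smul_comm, mul_comm]

lemma alt_succ (x : ℕ → R) (n : ℕ) (l : Fin (n+1) → ℕ)
    (hl : ∀ j : Fin n, l j.succ ≤ l j.castSucc) :
    alt x (n+1) l = x n ^ l (Fin.last n) * (∏ i : Fin n, (x i - x n)) *
      ∑ m ∈ Fintype.piFinset (fun j : Fin n => Finset.Ico (l j.succ) (l j.castSucc)),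
        (∏ j, x n ^ (l j.castSucc - 1 - m j)) * alt x n m := by
  let B : Matrix (Fin (n+1)) (Fin (n+1)) R := Matrix.of fun i =>
    Fin.lastCases (x i ^ l (Fin.last n))
      (fun j => (x i - x n) * ∑ m ∈ Finset.Ico (l j.succ) (l j.castSucc),
        x i ^ m * x n ^ (l j.castSucc - 1 - m))
  have h1 : alt x (n+1) l = B.det := by
    apply det_col _ _ (fun j => x n ^ (l j.castSucc - l j.succ))
    · intro i; simp [B]
    · intro i j
      simp only [B, Matrix.of_apply, Fin.lastCases_castSucc]
      rw [(Commute.all (x i) (x n)).mul_geom_sum₂_Ico (hl j)]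
      ring
  rw [h1, Matrix.det_succ_row B (Fin.last n), Fin.sum_univ_castSucc, Finset.sum_eq_zero, zero_add]
  · have h2 : B.submatrix (Fin.last n).succAbove (Fin.last n).succAbove =
        Matrix.of fun i j : Fin n => (x i - x n) *
          (Matrix.of fun i j : Fin n => ∑ m ∈ Finset.Ico (l j.succ) (l j.castSucc),
          x i ^ m * x n ^ (l j.castSucc - 1 - m)) i j := by
      ext i j
      simp [B, Fin.succAbove_last]
    rw [h2, Matrix.det_mul_column (fun i : Fin n => x i - x n), det_sums x (x n) _
      (fun j m => l j.castSucc - 1 - m)]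
    have h3 : B (Fin.last n) (Fin.last n) = x n ^ l (Fin.last n) := by simp [B]
    rw [h3, Even.neg_one_pow ⟨_, rfl⟩]
    ring
  · intro j _
    have : B (Fin.last n) j.castSucc = 0 := by simp [B]
    rw [this]; simp

lemma alt_eq (x : ℕ → R) : ∀ (n : ℕ) (lam : Fin n → ℕ), Antitone lam →
    alt x n (fun j => lam j + (n - 1 - j)) = vdm x n * gt x n lam := by
  intro n
  induction n with
  | zero => intro lam _; simp [alt, vdm, gt]
  | succ n ih =>
    intro lam hlam
    have hs : ∀ j : Fin n, lam j.succ ≤ lam j.castSucc := fun j =>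
      hlam (Fin.castSucc_lt_succ).le
    rw [alt_succ]
    · have hv : vdm x (n+1) = vdm x n * ∏ i : Fin n, (x i - x n) := by
        simp [vdm, Finset.prod_range_succ]
      have hsum : ∑ m ∈ Fintype.piFinset (fun j : Fin n => Finset.Ico
            (lam j.succ + (n + 1 - 1 - (j.succ : Fin (n+1)).val))
            (lam j.castSucc + (n + 1 - 1 - (j.castSucc : Fin (n+1)).val))),
            (∏ j : Fin n, x n ^ (lam j.castSucc + (n + 1 - 1 - (j.castSucc : Fin (n+1)).val)
              - 1 - m j)) * alt x n m =
          ∑ μ ∈ Fintype.piFinset (fun j : Fin n => Finset.Icc (lam j.succ) (lam j.castSucc)),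
            (∏ j, x n ^ (lam j.castSucc - μ j)) * alt x n (fun j => μ j + (n - 1 - j)) := by
        symm
        refine Finset.sum_nbij' (fun μ j => μ j + (n - 1 - j)) (fun m j => m j - (n - 1 - j))
          ?_ ?_ ?_ ?_ ?_
        · intro μ hμ
          simp only [Fintype.mem_piFinset, Finset.mem_Icc, Finset.mem_Ico, Fin.val_succ,
            Fin.val_castSucc] at hμ ⊢
          intro j
          have := hμ j
          have := j.2
          omega
        · intro μ hμ
          simp only [Fintype.mem_piFinset, Finset.mem_Icc, Finset.mem_Ico, Fin.val_succ,
            Fin.val_castSucc] at hμ ⊢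
          intro j
          have := hμ j
          have := j.2
          omega
        · intro μ hμ
          funext j
          simp
        · intro μ hμ
          simp only [Fintype.mem_piFinset, Finset.mem_Icc, Finset.mem_Ico, Fin.val_succ,
            Fin.val_castSucc] at hμ ⊢
          funext j
          have := hμ j
          have := j.2
          omega
        · intro μ hμ
          congr 1
          refine Finset.prod_congr rfl fun j _ => ?_
          congr 1
          have := j.2
          simp only [Fin.val_castSucc]
          omega
      rw [hsum, hv, gt]
      have hih : ∀ μ ∈ Fintype.piFinset
          (fun j : Fin n => Finset.Icc (lam j.succ) (lam j.castSucc)),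
          (∏ j, x n ^ (lam j.castSucc - μ j)) * alt x n (fun j => μ j + (n - 1 - j)) =
          vdm x n * ((∏ j, x n ^ (lam j.castSucc - μ j)) * gt x n μ) := by
        intro μ hμ
        simp only [Fintype.mem_piFinset, Finset.mem_Icc] at hμ
        rw [ih μ]
        · ring
        · intro a b hab
          rcases hab.eq_or_lt with rfl | hab
          · exact le_rfl
          · exact ((hμ b).2.trans (hlam (by
              rw [Fin.le_def]; simp only [Fin.val_succ, Fin.val_castSucc]; exact hab))).trans (hμ a).1
      rw [Finset.sum_congr rfl hih, ← Finset.mul_sum]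
      simp only [Fin.val_last, Nat.add_sub_cancel, Nat.sub_self, Nat.add_zero]
      ring
    · intro j
      have := hs j
      have := j.2
      simp only [Fin.val_succ, Fin.val_castSucc]
      omega

end Alternant

end KeyPoly

namespace KeyPoly
open MvPolynomial

/-! ### Part D: branching of tableaux -/

/-- The set of tableaux. -/
def tabs {n : ℕ} (lam : NPartition n) : Set (ℕ → ℕ → ℕ) :=
  {T | IsSSYT lam T ∧ ZeroOutside lam T}

/-- The partition with given parts. -/
def mkP {n : ℕ} (μ : Fin n → ℕ) (h : Antitone μ) : NPartition n where
  part i := if h : i - 1 < n then μ ⟨i - 1, h⟩ else 0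
  antitone := by
    intro i j hi hij
    by_cases hj : j - 1 < n
    · rw [dif_pos hj, dif_pos (by omega)]
      exact h (by rw [Fin.le_def]; simp only; omega)
    · rw [dif_neg hj]; exact Nat.zero_le _
  outside := by
    intro i hi
    rw [dif_neg (by omega)]

lemma mkP_part {n : ℕ} (μ : Fin n → ℕ) (h : Antitone μ) (j : Fin n) :
    (mkP μ h).part (j + 1) = μ j := by
  simp [mkP]

/-- Interlacing top rows. -/
def inter {n : ℕ} (lam : NPartition (n+1)) : Finset (Fin n → ℕ) :=
  Fintype.piFinset fun j : Fin n => Finset.Icc (lam.part (j + 2)) (lam.part (j + 1))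

lemma mem_inter {n : ℕ} {lam : NPartition (n+1)} {μ : Fin n → ℕ} :
    μ ∈ inter lam ↔ ∀ j : Fin n, lam.part (j+2) ≤ μ j ∧ μ j ≤ lam.part (j+1) := by
  simp [inter, Fintype.mem_piFinset]

lemma inter_antitone {n : ℕ} {lam : NPartition (n+1)} {μ : Fin n → ℕ} (h : μ ∈ inter lam) :
    Antitone μ := by
  rw [mem_inter] at h
  intro a b hab
  rcases hab.eq_or_lt with rfl | hab
  · exact le_rfl
  · have : lam.part (b + 1) ≤ lam.part (a + 2) := lam.antitone (by omega) (by
      rw [Fin.lt_def] at hab; omega)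
    exact ((h b).2.trans this).trans (h a).1

/-- Extension of a tableau of shape `mu` by entries `n+1`. -/
def extT {n : ℕ} (lam : NPartition (n+1)) (mu : NPartition n) (T : ℕ → ℕ → ℕ) : ℕ → ℕ → ℕ :=
  fun j i => if InShape mu j i then T j i else if InShape lam j i then n + 1 else 0

/-- `mu` interlaces `lam`. -/
def Il {n : ℕ} (lam : NPartition (n+1)) (mu : NPartition n) : Prop :=
  ∀ i, 1 ≤ i → i ≤ n → lam.part (i+1) ≤ mu.part i ∧ mu.part i ≤ lam.part i

lemma il_mkP {n : ℕ} {lam : NPartition (n+1)} {μ : Fin n → ℕ} (h : μ ∈ inter lam) :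
    Il lam (mkP μ (inter_antitone h)) := by
  intro i h1 h2
  have e := mkP_part μ (inter_antitone h) ⟨i - 1, by omega⟩
  have h' := mem_inter.mp h ⟨i - 1, by omega⟩
  simp only at e h'
  rw [show i - 1 + 1 = i by omega] at e h'
  rw [show i - 1 + 2 = i + 1 by omega] at h'
  rw [e]; exact h'

lemma Il.sub {n : ℕ} {lam : NPartition (n+1)} {mu : NPartition n} (h : Il lam mu) {j i : ℕ}
    (hs : InShape mu j i) : InShape lam j i := by
  obtain ⟨a, b, c, d⟩ := hs
  exact ⟨a, b, by omega, d.trans (h i b c).2⟩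

lemma shape_left {n : ℕ} {lam : NPartition n} {j i : ℕ} (h : InShape lam (j+1) i) (hj : 1 ≤ j) :
    InShape lam j i := ⟨hj, h.2.1, h.2.2.1, by have := h.2.2.2; omega⟩

lemma shape_up {n : ℕ} {lam : NPartition n} {j i : ℕ} (h : InShape lam j (i+1)) (hi : 1 ≤ i) :
    InShape lam j i :=
  ⟨h.1, hi, by have := h.2.2.1; omega, h.2.2.2.trans (lam.antitone hi (by omega))⟩

lemma extT_mem {n : ℕ} {lam : NPartition (n+1)} {mu : NPartition n} (h : Il lam mu)
    {T : ℕ → ℕ → ℕ} (hT : T ∈ tabs mu) : extT lam mu T ∈ tabs lam := by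
  obtain ⟨⟨t1, t2, t3⟩, t4⟩ := hT
  have z : ∀ j i, ¬ InShape lam j i → extT lam mu T j i = 0 := by
    intro j i hs
    rw [extT, if_neg (fun hh => hs (h.sub hh)), if_neg hs]
  have le : ∀ j i, extT lam mu T j i ≤ n + 1 := by
    intro j i
    unfold extT
    split_ifs with h1 h2
    · have := t1 j i h1; omega
    · omega
    · omega
  refine ⟨⟨?_, ?_, ?_⟩, z⟩
  · intro j i hs
    refine ⟨?_, le j i⟩
    unfold extT
    split_ifs with h1
    · exact (t1 j i h1).1
    · omega
  · intro j i hs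
    rcases Nat.eq_zero_or_pos j with rfl | hj
    · rw [z 0 i (fun hh => by have := hh.1; omega)]; omega
    by_cases h1 : InShape mu (j+1) i
    · rw [extT, extT, if_pos h1, if_pos (shape_left h1 hj)]
      exact t2 j i h1
    · have : extT lam mu T (j+1) i = n + 1 := by rw [extT, if_neg h1, if_pos hs]
      rw [this]; exact le j i
  · intro j i hs
    rcases Nat.eq_zero_or_pos i with rfl | hi
    · rw [z j 0 (fun hh => by have := hh.2.1; omega)]
      unfold extT
      split_ifs with h1
      · have := (t1 _ _ h1).1; omega
      · omega
    by_cases h1 : InShape mu j (i+1)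
    · rw [extT, extT, if_pos h1, if_pos (shape_up h1 hi)]
      exact t3 j i h1
    · have e : extT lam mu T j (i+1) = n + 1 := by rw [extT, if_neg h1, if_pos hs]
      obtain ⟨a, b, c, d⟩ := hs
      have h2 : InShape mu j i := ⟨a, hi, by omega, d.trans (h i hi (by omega)).1⟩
      rw [e, extT, if_pos h2]
      have := t1 j i h2
      omega

lemma row_mono {n : ℕ} {lam : NPartition n} {T : ℕ → ℕ → ℕ} (hT : T ∈ tabs lam) {i a b : ℕ}
    (hab : a ≤ b) (hb : InShape lam b i) : T a i ≤ T b i := by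
  induction b, hab using Nat.le_induction with
  | base => exact le_rfl
  | succ b hab ih =>
    rcases Nat.eq_zero_or_pos b with rfl | hb0
    · obtain rfl : a = 0 := by omega
      exact hT.1.2.1 0 i hb
    · exact (ih (shape_left hb hb0)).trans (hT.1.2.1 b i hb)

lemma extT_surj {n : ℕ} {lam : NPartition (n+1)} {T : ℕ → ℕ → ℕ} (hT : T ∈ tabs lam) :
    ∃ (μ : Fin n → ℕ) (h : μ ∈ inter lam), ∃ T' ∈ tabs (mkP μ (inter_antitone h)),
      extT lam (mkP μ (inter_antitone h)) T' = T := by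
  have hT0 := hT
  obtain ⟨⟨t1, t2, t3⟩, t4⟩ := hT
  let f : ℕ → ℕ := fun i => Nat.findGreatest (fun j => T j i ≤ n) (lam.part i)
  have z0 : ∀ i, T 0 i = 0 := fun i => t4 0 i (fun hh => by have := hh.1; omega)
  have fle : ∀ i, f i ≤ lam.part i := fun i => Nat.findGreatest_le _
  have fspec : ∀ i, T (f i) i ≤ n := fun i =>
    Nat.findGreatest_spec (P := fun j => T j i ≤ n) (m := 0) (Nat.zero_le _) (by
      rw [z0]; omega)
  have fiff : ∀ i j, InShape lam j i → (j ≤ f i ↔ T j i ≤ n) := by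
    intro i j hs
    constructor
    · intro hj
      refine le_trans (row_mono hT0 hj ?_) (fspec i)
      exact ⟨hs.1.trans hj, hs.2.1, hs.2.2.1, fle i⟩
    · intro hj
      exact Nat.le_findGreatest hs.2.2.2 hj
  have hμ : (fun j : Fin n => f (j + 1)) ∈ inter lam := by
    rw [mem_inter]
    intro j
    refine ⟨?_, fle _⟩
    rcases Nat.eq_zero_or_pos (lam.part (j + 2)) with h0 | h0
    · rw [h0]; exact Nat.zero_le _
    · have hs : InShape lam (lam.part (j+2)) (j + 1 + 1) := ⟨h0, by omega, by omega, le_rfl⟩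
      rw [fiff _ _ (shape_up hs (by omega))]
      have := t3 _ _ hs
      have := (t1 _ _ hs).2
      omega
  refine ⟨_, hμ, ?_⟩
  set mu := mkP _ (inter_antitone hμ) with hmu
  have hil : Il lam mu := il_mkP hμ
  have hpart : ∀ i, 1 ≤ i → i ≤ n → mu.part i = f i := by
    intro i h1 h2
    have := mkP_part _ (inter_antitone hμ) ⟨i - 1, by omega⟩
    simp only at this
    rw [show i - 1 + 1 = i by omega] at this
    rw [hmu, this]
  have hsh : ∀ j i, InShape mu j i ↔ InShape lam j i ∧ T j i ≤ n := by
    intro j i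
    constructor
    · intro hs
      have hl := hil.sub hs
      refine ⟨hl, (fiff i j hl).mp ?_⟩
      rw [← hpart i hs.2.1 hs.2.2.1]; exact hs.2.2.2
    · rintro ⟨hs, hle⟩
      have hin : i ≤ n := by
        by_contra hc
        have hi : i = n + 1 := by have := hs.2.2.1; omega
        -- a column entry in row `n+1` is at least `n+1`
        have key : ∀ k, k ≤ i → k ≤ T j k := by
          intro k
          induction k with
          | zero => intro _; omega
          | succ k ihk =>
            intro hk
            have hsk : InShape lam j (k+1) :=
              ⟨hs.1, by omega, by omega, hs.2.2.2.trans (lam.antitone (by omega) hk)⟩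
            have := t3 j k hsk
            have := ihk (by omega)
            omega
        have := key i le_rfl
        omega
      refine ⟨hs.1, hs.2.1, hin, ?_⟩
      rw [hpart i hs.2.1 hin]
      exact (fiff i j hs).mpr hle
  refine ⟨fun j i => if InShape mu j i then T j i else 0, ⟨⟨?_, ?_, ?_⟩, ?_⟩, ?_⟩
  · intro j i hs
    simp only [if_pos hs]
    exact ⟨(t1 j i (hil.sub hs)).1, ((hsh j i).mp hs).2⟩
  · intro j i hs
    simp only [if_pos hs]
    split_ifs
    · exact t2 j i (hil.sub hs)
    · omega
  · intro j i hs
    simp only [if_pos hs]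
    have := t3 j i (hil.sub hs)
    split_ifs <;> omega
  · intro j i hs
    simp only [if_neg hs]
  · funext j i
    unfold extT
    by_cases h1 : InShape mu j i
    · simp only [if_pos h1]
    · simp only [if_neg h1]
      by_cases h2 : InShape lam j i
      · rw [if_pos h2]
        have h3 : ¬ T j i ≤ n := fun hh => h1 ((hsh j i).mpr ⟨h2, hh⟩)
        have := (t1 j i h2).2
        omega
      · rw [if_neg h2, t4 j i h2]

lemma extT_shape {n : ℕ} {lam : NPartition (n+1)} {mu : NPartition n} {T : ℕ → ℕ → ℕ}
    (hT : T ∈ tabs mu) (j i : ℕ) :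
    InShape mu j i ↔ 1 ≤ extT lam mu T j i ∧ extT lam mu T j i ≤ n := by
  constructor
  · intro hs
    rw [extT, if_pos hs]; exact hT.1.1 j i hs
  · intro hh
    by_contra hs
    rw [extT, if_neg hs] at hh
    split_ifs at hh <;> omega

lemma extT_inj {n : ℕ} {lam : NPartition (n+1)} {mu : NPartition n} :
    Set.InjOn (extT lam mu) (tabs mu) := by
  intro T hT T' hT' h
  funext j i
  by_cases hs : InShape mu j i
  · have := congrFun (congrFun h j) i
    rwa [extT, extT, if_pos hs, if_pos hs] at this
  · rw [hT.2 j i hs, hT'.2 j i hs]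

lemma part_eq_of_shape {n : ℕ} {mu mu' : NPartition n}
    (h : ∀ j i, InShape mu j i ↔ InShape mu' j i) (i : ℕ) (h1 : 1 ≤ i) (h2 : i ≤ n) :
    mu.part i = mu'.part i := by
  apply le_antisymm
  · rcases Nat.eq_zero_or_pos (mu.part i) with h0 | h0
    · omega
    · exact ((h _ i).mp ⟨h0, h1, h2, le_rfl⟩).2.2.2
  · rcases Nat.eq_zero_or_pos (mu'.part i) with h0 | h0
    · omega
    · exact ((h _ i).mpr ⟨h0, h1, h2, le_rfl⟩).2.2.2

lemma weight_eq {n : ℕ} (lam : NPartition n) (T : ℕ → ℕ → ℕ) :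
    weight lam T = ∏ i ∈ Finset.Icc 1 n, ∏ j ∈ Finset.Icc 1 (lam.part i), (X (T j i) : Poly) := by
  rw [weight, boxes, Finset.prod_filter, Finset.prod_product_right]
  refine Finset.prod_congr rfl fun i hi => ?_
  rw [← Finset.prod_filter]
  refine Finset.prod_congr ?_ fun _ _ => rfl
  ext j
  simp only [Finset.mem_filter, Finset.mem_Icc] at hi ⊢
  have := lam.antitone le_rfl hi.1
  omega

lemma weight_extT {n : ℕ} {lam : NPartition (n+1)} {mu : NPartition n} (h : Il lam mu)
    (T : ℕ → ℕ → ℕ) :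
    weight lam (extT lam mu T) = X (n+1) ^ lam.part (n+1) *
      ((∏ i ∈ Finset.Icc 1 n, X (n+1) ^ (lam.part i - mu.part i)) * weight mu T) := by
  rw [weight_eq, weight_eq, Finset.prod_Icc_succ_top (by omega), ← Finset.prod_mul_distrib, mul_comm]
  congr 1
  · rw [Finset.prod_congr rfl (g := fun _ => (X (n+1) : Poly)), Finset.prod_const]
    · simp
    · intro j hj
      rw [Finset.mem_Icc] at hj
      rw [extT, if_neg (fun hh => by have := hh.2.2.1; omega),
        if_pos ⟨hj.1, by omega, le_rfl, hj.2⟩]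
  · refine Finset.prod_congr rfl fun i hi => ?_
    rw [Finset.mem_Icc] at hi
    have hm := (h i hi.1 hi.2).2
    have hsplit : Finset.Icc 1 (lam.part i) =
        Finset.Icc 1 (mu.part i) ∪ Finset.Ioc (mu.part i) (lam.part i) := by
      ext j; simp only [Finset.mem_Icc, Finset.mem_union, Finset.mem_Ioc]; omega
    rw [hsplit, Finset.prod_union, mul_comm]
    · congr 1
      · rw [Finset.prod_congr rfl (g := fun _ => (X (n+1) : Poly)), Finset.prod_const]
        · simp
        · intro j hj
          rw [Finset.mem_Ioc] at hj
          rw [extT, if_neg (fun hh => by have := hh.2.2.2; omega),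
            if_pos ⟨by omega, hi.1, by omega, hj.2⟩]
      · refine Finset.prod_congr rfl fun j hj => ?_
        rw [Finset.mem_Icc] at hj
        rw [extT, if_pos ⟨hj.1, hi.1, hi.2, hj.2⟩]
    · rw [Finset.disjoint_left]
      intro j; simp only [Finset.mem_Icc, Finset.mem_Ioc]; omega

/-- The variables `x_1, x_2, …`, indexed from zero. -/
abbrev xv : ℕ → Poly := fun k => X (k + 1)

lemma prod_Icc_fin {M : Type*} [CommMonoid M] (n : ℕ) (f : ℕ → M) :
    ∏ i ∈ Finset.Icc 1 n, f i = ∏ j : Fin n, f (j + 1) := by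
  rw [Fin.prod_univ_eq_prod_range (fun k => f (k+1)) n]
  induction n with
  | zero => simp
  | succ n ih => rw [Finset.prod_Icc_succ_top (by omega), Finset.prod_range_succ, ih]

theorem tabs_sum : ∀ (n : ℕ) (lam : NPartition n), (tabs lam).Finite ∧
    ∑ᶠ T ∈ tabs lam, weight lam T = gt xv n (fun j => lam.part (j + 1)) := by
  intro n
  induction n with
  | zero =>
    intro lam
    have hs : ∀ j i, ¬ InShape lam j i := fun j i hh => by
      have := hh.2.1; have := hh.2.2.1; omega
    have : tabs lam = {fun _ _ => 0} := by
      ext T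
      simp only [Set.mem_singleton_iff]
      constructor
      · intro hT; funext j i; exact hT.2 j i (hs j i)
      · rintro rfl
        exact ⟨⟨fun j i h => absurd h (hs j i), fun j i h => absurd h (hs _ _),
          fun j i h => absurd h (hs _ _)⟩, fun _ _ _ => rfl⟩
    rw [this]
    refine ⟨Set.finite_singleton _, ?_⟩
    rw [finsum_mem_singleton, weight_eq]
    simp [gt]
  | succ n ih =>
    intro lam
    let g : (inter lam) → Set (ℕ → ℕ → ℕ) := fun μ =>
      extT lam (mkP μ.1 (inter_antitone μ.2)) '' tabs (mkP μ.1 (inter_antitone μ.2))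
    have hU : tabs lam = ⋃ μ : inter lam, g μ := by
      ext T
      simp only [Set.mem_iUnion]
      constructor
      · intro hT
        obtain ⟨μ, hμ, T', hT', e⟩ := extT_surj hT
        exact ⟨⟨μ, hμ⟩, T', hT', e⟩
      · rintro ⟨⟨μ, hμ⟩, T', hT', rfl⟩
        exact extT_mem (il_mkP hμ) hT'
    have hfin : ∀ μ, (g μ).Finite := fun μ => (ih _).1.image _
    have hdis : Pairwise (Function.onFun Disjoint g) := by
      rintro ⟨μ, hμ⟩ ⟨μ', hμ'⟩ hne
      rw [Function.onFun, Set.disjoint_left]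
      rintro _ ⟨T, hT, rfl⟩ ⟨T', hT', e⟩
      apply hne
      simp only at hT hT' e
      have hsh : ∀ j i, InShape (mkP μ (inter_antitone hμ)) j i ↔
          InShape (mkP μ' (inter_antitone hμ')) j i := fun j i => by
        rw [extT_shape (lam := lam) hT, extT_shape (lam := lam) hT', e]
      apply Subtype.ext
      funext j
      have := part_eq_of_shape hsh (j+1) (by omega) (by omega)
      rwa [mkP_part, mkP_part] at this
    refine ⟨by rw [hU]; exact Set.finite_iUnion hfin, ?_⟩
    rw [hU, finsum_mem_iUnion hdis hfin, finsum_eq_sum_of_fintype, gt, Finset.mul_sum]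
    have hcoe : (∑ μ : inter lam, ∑ᶠ T ∈ g μ, weight lam T) =
        ∑ μ : inter lam, xv n ^ lam.part (n + 1) *
          ((∏ j : Fin n, xv n ^ (lam.part (j+1) - μ.1 j)) * gt xv n μ.1) := by
      refine Finset.sum_congr rfl fun μ _ => ?_
      simp only [g]
      rw [finsum_mem_image extT_inj]
      have hw : ∀ T, weight lam (extT lam (mkP μ.1 (inter_antitone μ.2)) T) =
          (xv n ^ lam.part (n + 1) *
          (∏ j : Fin n, xv n ^ (lam.part (j+1) - μ.1 j))) *
            weight (mkP μ.1 (inter_antitone μ.2)) T := by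
        intro T
        rw [weight_extT (il_mkP μ.2), prod_Icc_fin, mul_assoc]
        simp only [mkP_part]
      simp only [hw]
      rw [← mul_finsum_mem, (ih _).2, mul_assoc]
      simp only [mkP_part]
    rw [hcoe]
    rw [Finset.sum_coe_sort (inter lam) (fun μ => xv n ^ lam.part (n + 1) *
          ((∏ j : Fin n, xv n ^ (lam.part (j+1) - μ j)) * gt xv n μ))]
    rfl

end KeyPoly

namespace KeyPoly
open MvPolynomial

/-! ### Part E: the antisymmetrizer -/

/-- `Fin (m+1)` as the interval `[1, m+1]`. -/
def finE (m : ℕ) : Fin (m+1) ≃ {k : ℕ // 1 ≤ k ∧ k ≤ m + 1} where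
  toFun j := ⟨j + 1, by omega, by omega⟩
  invFun k := ⟨k.1 - 1, by have := k.2; omega⟩
  left_inv j := by simp
  right_inv k := by
    have := k.2
    apply Subtype.ext; simp only; omega

/-- Permutations of `Fin (m+1)` act on `[1, m+1]`. -/
def eP (m : ℕ) : Equiv.Perm (Fin (m+1)) →* Equiv.Perm ℕ := Equiv.Perm.extendDomainHom (finE m)

lemma eP_apply {m : ℕ} (σ : Equiv.Perm (Fin (m+1))) (j : Fin (m+1)) :
    eP m σ (j + 1) = σ j + 1 := by
  have := Equiv.Perm.extendDomain_apply_image σ (finE m) j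
  exact this

lemma eP_fix {m : ℕ} (σ : Equiv.Perm (Fin (m+1))) (k : ℕ) (h : ¬ (1 ≤ k ∧ k ≤ m + 1)) :
    eP m σ k = k :=
  Equiv.Perm.extendDomain_apply_not_subtype σ (finE m) h

lemma eP_swap {m : ℕ} (i : Fin m) :
    eP m (Equiv.swap i.castSucc i.succ) = tr (i + 1) := by
  ext k
  by_cases h : 1 ≤ k ∧ k ≤ m + 1
  · obtain ⟨j, rfl⟩ : ∃ j : Fin (m+1), k = j + 1 := ⟨⟨k - 1, by omega⟩, by simp only; omega⟩
    rw [eP_apply]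
    by_cases h1 : j = i.castSucc
    · subst h1; rw [Equiv.swap_apply_left]; simp
    by_cases h2 : j = i.succ
    · subst h2; rw [Equiv.swap_apply_right]; simp
    rw [Equiv.swap_apply_of_ne_of_ne h1 h2, tr_other]
    · intro hh; apply h1; ext; simp; omega
    · intro hh; apply h2; ext; simp; omega
  · rw [eP_fix _ _ h, tr_other] <;> omega

/-- The action on polynomials. -/
def act {m : ℕ} (σ : Equiv.Perm (Fin (m+1))) : Poly →ₐ[ℚ] Poly := rename (eP m σ)

lemma act_mul {m : ℕ} (σ τ : Equiv.Perm (Fin (m+1))) (P : Poly) :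
    act (σ * τ) P = act σ (act τ P) := by
  simp only [act, rename_rename, map_mul]
  rfl

lemma act_swap {m : ℕ} (i : Fin m) (P : Poly) :
    act (Equiv.swap i.castSucc i.succ) P = sOp (i + 1) P := by
  rw [act, eP_swap]; rfl

lemma act_symm {m : ℕ} {P : Poly} (h : ∀ i, 1 ≤ i → i + 1 ≤ m + 1 → sOp i P = P)
    (σ : Equiv.Perm (Fin (m+1))) : act σ P = P := by
  have hσ : σ ∈ Submonoid.closure
      (Set.range fun i : Fin m => Equiv.swap i.castSucc i.succ) := by
    rw [Equiv.Perm.mclosure_swap_castSucc_succ]; trivial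
  induction hσ using Submonoid.closure_induction with
  | mem x hx =>
    obtain ⟨i, rfl⟩ := hx
    simp only
    rw [act_swap]; exact h _ (by omega) (by omega)
  | one =>
    rw [act, map_one]
    exact rename_id_apply P
  | mul x y _ _ hx hy => rw [act_mul, hy, hx]

/-- The antisymmetrizer. -/
def asym (m : ℕ) (P : Poly) : Poly :=
  ∑ σ : Equiv.Perm (Fin (m+1)), Equiv.Perm.sign σ • act σ P

lemma asym_add (m : ℕ) (P Q : Poly) : asym m (P + Q) = asym m P + asym m Q := by
  simp [asym, smul_add, Finset.sum_add_distrib]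

lemma asym_sOp (m : ℕ) (i : ℕ) (h1 : 1 ≤ i) (h2 : i + 1 ≤ m + 1) (P : Poly) :
    asym m (sOp i P) = - asym m P := by
  obtain ⟨j, rfl⟩ : ∃ j : Fin m, i = j + 1 := ⟨⟨i - 1, by omega⟩, by simp only; omega⟩
  set s := Equiv.swap j.castSucc j.succ with hs
  have hsign : Equiv.Perm.sign s = -1 := Equiv.Perm.sign_swap (Fin.castSucc_lt_succ).ne
  rw [asym, asym, ← Finset.sum_neg_distrib,
    ← Equiv.sum_comp (Equiv.mulRight s) fun σ => -(Equiv.Perm.sign σ • act σ P)]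
  refine Finset.sum_congr rfl fun σ _ => ?_
  rw [← act_swap, ← act_mul, Equiv.coe_mulRight, Equiv.Perm.sign_mul, hsign]
  simp [hs]

lemma asym_zero (m : ℕ) (i : ℕ) (h1 : 1 ≤ i) (h2 : i + 1 ≤ m + 1) (P : Poly)
    (h : sOp i P = P) : asym m P = 0 := by
  have := asym_sOp m i h1 h2 P
  rw [h] at this
  exact self_eq_neg.mp this

lemma asym_mul (m : ℕ) (F P : Poly) (h : ∀ i, 1 ≤ i → i + 1 ≤ m + 1 → sOp i F = F) :
    asym m (P * F) = F * asym m P := by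
  rw [asym, asym, Finset.mul_sum]
  refine Finset.sum_congr rfl fun σ _ => ?_
  rw [map_mul, act_symm h, mul_smul_comm, mul_comm]

lemma asym_monomial (m : ℕ) (l : Fin (m+1) → ℕ) :
    asym m (∏ j : Fin (m+1), xv j ^ l j) = alt xv (m+1) l := by
  rw [asym, alt, Matrix.det_apply]
  refine Finset.sum_congr rfl fun σ _ => ?_
  congr 1
  rw [map_prod]
  refine Finset.prod_congr rfl fun j _ => ?_
  rw [map_pow, act, rename_X, eP_apply]
  rfl

/-- `x^δ`. -/
def dl (m : ℕ) : Poly := ∏ k ∈ Finset.Icc 1 (m+1), X k ^ (m + 1 - k)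

lemma dl_symm (m i : ℕ) (h1 : 1 ≤ i) (h2 : i + 1 ≤ m + 1) :
    sOp i (dl m * X (i+1)) = dl m * X (i+1) := by
  have m1 : i ∈ Finset.Icc 1 (m+1) := by rw [Finset.mem_Icc]; omega
  have m2 : i + 1 ∈ (Finset.Icc 1 (m+1)).erase i := by
    rw [Finset.mem_erase, Finset.mem_Icc]; omega
  rw [dl, ← Finset.mul_prod_erase _ _ m1, ← Finset.mul_prod_erase _ _ m2]
  set S := ((Finset.Icc 1 (m+1)).erase i).erase (i+1) with hS
  have hrest : sOp i (∏ k ∈ S, X k ^ (m + 1 - k)) = ∏ k ∈ S, X k ^ (m + 1 - k) := by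
    rw [sOp, map_prod]
    refine Finset.prod_congr rfl fun k hk => ?_
    rw [hS, Finset.mem_erase, Finset.mem_erase] at hk
    rw [map_pow]
    congr 1
    exact sOp_X_other i k hk.2.1 hk.1
  have hp : ∀ (P : Poly) (e : ℕ), sOp i (P ^ e) = sOp i P ^ e := fun P e => by simp [sOp]
  simp only [sOp_mul, hp, hrest, sOp_X_left, sOp_X_right]
  obtain ⟨d, hd⟩ : ∃ d, m + 1 - (i + 1) = d := ⟨_, rfl⟩
  rw [hd, show m + 1 - i = d + 1 by omega]
  ring

lemma asym_rhoOp (m i : ℕ) (h1 : 1 ≤ i) (h2 : i + 1 ≤ m + 1) (P : Poly) :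
    asym m (dl m * rhoOp i P) = asym m (dl m * P) := by
  obtain ⟨Q, hQ, e⟩ := rhoOp_eq i P
  rw [e, mul_add, asym_add, asym_zero m i h1 h2 (dl m * (X (i+1) * Q)), add_zero]
  rw [← mul_assoc, sOp_mul, dl_symm m i h1 h2, hQ]

lemma asym_applyOps (m : ℕ) (w : List ℕ) (hw : ∀ i ∈ w, 1 ≤ i ∧ i + 1 ≤ m + 1) (P : Poly) :
    asym m (dl m * applyOps rhoOp w P) = asym m (dl m * P) := by
  induction w with
  | nil => rfl
  | cons i w ih =>
    obtain ⟨h1, h2⟩ := hw i (by simp)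
    rw [applyOps, asym_rhoOp m i h1 h2, ih fun j hj => hw j (by simp [hj])]

lemma asym_dl (m : ℕ) (f : ℕ → ℕ) (hf : Antitone fun j : Fin (m+1) => f (j+1)) :
    asym m (dl m * ∏ i ∈ Finset.Icc 1 (m+1), X i ^ f i) =
      vdm xv (m+1) * gt xv (m+1) (fun j => f (j+1)) := by
  rw [← alt_eq xv (m+1) _ hf, ← asym_monomial, dl, ← Finset.prod_mul_distrib, prod_Icc_fin]
  congr 1
  refine Finset.prod_congr rfl fun j _ => ?_
  rw [← pow_add]
  congr 1
  omega

lemma gt_zero {R : Type*} [CommRing R] (x : ℕ → R) (n : ℕ) : gt x n (fun _ => 0) = 1 := by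
  induction n with
  | zero => rfl
  | succ n ih =>
    rw [gt, Finset.sum_eq_single (fun _ => 0)]
    · simp [ih]
    · intro μ hμ hne
      exfalso; apply hne
      funext j
      have := Fintype.mem_piFinset.mp hμ j
      simpa using this
    · intro h
      exfalso; apply h
      simp [Fintype.mem_piFinset]

lemma vdm_ne (n : ℕ) : vdm xv n ≠ 0 := by
  rw [vdm, Finset.prod_ne_zero_iff]
  intro k _
  rw [Finset.prod_ne_zero_iff]
  intro i _
  exact X_sub_ne _ _ (by have := i.2; omega)

end KeyPoly


namespace KeyPoly

/-- For any reduced word for the longest permutation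
`τ_0 = (n, n-1, …, 1)`, the Demazure polynomial `d_λ(τ_0;x)` equals the Schur
polynomial `s_λ(x) = Σ_{T ∈ T_λ} x^T`. -/
theorem demazure_longest_eq_schur (n : ℕ) (hn : 1 ≤ n) (lam : NPartition n)
    (w : List ℕ) (hw : IsReducedWord n w (fun t => n + 1 - t)) :
    applyOps rhoOp w (lamMonomial lam) =
      ∑ᶠ T ∈ {T : ℕ → ℕ → ℕ | IsSSYT lam T ∧ ZeroOutside lam T},
        weight lam T := by
  obtain ⟨m, rfl⟩ : ∃ m, n = m + 1 := ⟨n - 1, by omega⟩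
  have hsym := demazure_symm hw (lamMonomial lam)
  have h1 := asym_applyOps m w hw.1.1 (lamMonomial lam)
  rw [asym_mul m _ _ hsym] at h1
  have h2 := asym_dl m lam.part (fun a b hab => lam.antitone (by omega) (by
    rw [Fin.le_def] at hab; omega))
  have h3 := asym_dl m (fun _ => 0) (fun a b hab => le_rfl)
  simp only [pow_zero, Finset.prod_const_one, mul_one] at h3
  rw [gt_zero, mul_one] at h3
  have h4 := (tabs_sum (m+1) lam).2
  change _ = ∑ᶠ T ∈ tabs lam, weight lam T
  rw [h4]
  apply mul_left_cancel₀ (vdm_ne (m+1))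
  rw [← h2, ← h3, mul_comm]
  exact h1

end KeyPoly
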